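/- If n and n + δ are both perfect numbers, δ ≡ 3 (mod 4), and n > 6, then gcd(δ, n) = 1. -/

import Mathlib

/-!
A number `N ≡ 3 (mod 4)` is never perfect, since its divisors pair off into pairs with sum
divisible by `4`. By Euclid–Euler an even perfect number other than `6` is divisible by `4`, so `n`
must be odd and `n + δ = 2 ^ k * q` with `q = 2 ^ (k + 1) - 1` prime. As `q ≡ 3 (mod 4)`, if `q`
divided `n` exactly once then `4 ∣ q + 1 ∣ σ(n) = 2 * n`, contradicting that `n` is odd. So `q ∣ n`
would force `q ^ 2 ≤ n < 2 ^ k * q ≤ q ^ 2`.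
-/

open Finset

section SumDivisors

variable {m n p q : ℕ}

-- A unit with square `1` is its own inverse, so `x * y = -1` gives `y = -x`.
theorem dvd_sum_divisors_of_dvd_succ (hm : 2 < m) (hunits : ∀ u : (ZMod m)ˣ, u ^ 2 = 1)
    (hn : m ∣ n + 1) : m ∣ ∑ d ∈ n.divisors, d := by
  have hsq {x y : ZMod m} (hxy : x * y = -1) : x ^ 2 = 1 := by
    have hx : IsUnit x := IsUnit.of_mul_eq_one (-y) (by rw [mul_neg, hxy, neg_neg])
    simpa using congrArg Units.val (hunits hx.unit)
  have hcast {x y : ℕ} (hxy : x * y = n) : (x : ZMod m) * y = -1 := by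
    rw [eq_neg_iff_add_eq_zero]
    exact_mod_cast hxy ▸ (ZMod.natCast_eq_zero_iff (n + 1) m).2 hn
  rw [← ZMod.natCast_eq_zero_iff, Nat.cast_sum,
    ← Nat.sum_divisorsAntidiagonal fun d _ ↦ (d : ZMod m)]
  refine sum_involution (fun x _ ↦ x.swap) ?_ ?_ ?_ fun x _ ↦ x.swap_swap
  · rintro ⟨x, y⟩ hx
    have hxy := hcast (Nat.mem_divisorsAntidiagonal.1 hx).1
    change (x + y : ZMod m) = 0
    linear_combination (-y : ZMod m) * hsq hxy + x * hxy
  · rintro ⟨x, y⟩ hx - hswap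
    obtain rfl : y = x := congrArg Prod.fst hswap
    have hyy := hcast (Nat.mem_divisorsAntidiagonal.1 hx).1
    have : Fact (2 < m) := ⟨hm⟩
    exact ZMod.neg_one_ne_one (by rw [← hyy, ← sq, hsq hyy])
  · exact fun x hx ↦ Nat.swap_mem_divisorsAntidiagonal.2 hx

theorem succ_dvd_sum_divisors (hp : p.Prime) (hpn : p ∣ n) (hpn2 : ¬ p ^ 2 ∣ n) :
    p + 1 ∣ ∑ d ∈ n.divisors, d := by
  obtain ⟨m, rfl⟩ := hpn
  have hpm : p.Coprime m := hp.coprime_iff_not_dvd.2 fun h ↦ hpn2 (sq p ▸ mul_dvd_mul_left p h)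
  rw [hpm.sum_divisors_mul, hp.sum_divisors, add_comm]
  exact dvd_mul_right _ _

theorem eq_and_prime_of_mul_sum_properDivisors_eq (hn : n ≠ 0) (hq : 1 < q)
    (h : q * ∑ d ∈ n.properDivisors, d = n) : q = n ∧ n.Prime := by
  rcases Nat.sum_properDivisors_dvd (Dvd.intro_left q h) with hsum | hsum
  · exact ⟨by rwa [hsum, mul_one] at h, Nat.sum_properDivisors_eq_one_iff_prime.1 hsum⟩
  · rw [hsum] at h
    exact absurd ((Nat.mul_eq_right hn).1 h) hq.ne'

theorem sum_divisors_two_pow (k : ℕ) : ∑ d ∈ (2 ^ k).divisors, d = mersenne (k + 1) := by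
  rw [Nat.sum_divisors_prime_pow Nat.prime_two, Nat.geomSum_eq le_rfl, Nat.div_one, mersenne]

end SumDivisors

section Perfect

variable {m n p : ℕ}

theorem sum_divisors_eq_two_mul_of_perfect (hn : n.Perfect) : ∑ d ∈ n.divisors, d = 2 * n :=
  (Nat.perfect_iff_sum_divisors_eq_two_mul hn.2).1 hn

theorem not_perfect_of_mod_four_eq_three (hn : n % 4 = 3) : ¬ n.Perfect := by
  intro hperf
  have h4 : 4 ∣ ∑ d ∈ n.divisors, d :=
    dvd_sum_divisors_of_dvd_succ (by norm_num) (by decide) (by lia)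
  rw [sum_divisors_eq_two_mul_of_perfect hperf] at h4
  lia

theorem sq_dvd_of_odd_perfect (hn : n.Perfect) (hodd : Odd n) (hp : p.Prime) (hp4 : p % 4 = 3)
    (hpn : p ∣ n) : p ^ 2 ∣ n := by
  by_contra hpn2
  have hsucc : p + 1 ∣ 2 * n :=
    sum_divisors_eq_two_mul_of_perfect hn ▸ succ_dvd_sum_divisors hp hpn hpn2
  have h4 : 4 ∣ 2 * n := dvd_trans (by lia) hsucc
  grind

theorem eq_two_pow_mul_prime_mersenne_of_even_perfect (hn : n.Perfect) (heven : Even n) :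
    ∃ k ≠ 0, (mersenne (k + 1)).Prime ∧ n = 2 ^ k * mersenne (k + 1) := by
  obtain ⟨k, m, hm, rfl⟩ := Nat.exists_eq_two_pow_mul_odd hn.2.ne'
  have hk : k ≠ 0 := by
    rintro rfl
    exact Nat.not_even_iff_odd.2 hm (by simpa using heven)
  have hcop : (2 ^ k).Coprime m := (Nat.coprime_two_left.2 hm).pow_left k
  have hsum := sum_divisors_eq_two_mul_of_perfect hn
  rw [hcop.sum_divisors_mul, sum_divisors_two_pow, Nat.sum_divisors_eq_sum_properDivisors_add_self,
    ← mul_assoc, ← pow_succ', ← succ_mersenne] at hsum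
  have hproper : mersenne (k + 1) * ∑ d ∈ m.properDivisors, d = m := by linarith
  obtain ⟨rfl, hprime⟩ := eq_and_prime_of_mul_sum_properDivisors_eq hm.pos.ne'
    (one_lt_mersenne.2 (by lia)) hproper
  exact ⟨k, hk, hprime, rfl⟩

theorem four_dvd_of_even_perfect (hn : n.Perfect) (heven : Even n) (hn6 : n ≠ 6) : 4 ∣ n := by
  obtain ⟨k, hk, -, rfl⟩ := eq_two_pow_mul_prime_mersenne_of_even_perfect hn heven
  have hk1 : k ≠ 1 := by
    rintro rfl
    exact hn6 rfl
  exact (pow_dvd_pow 2 (by lia : 2 ≤ k)).mul_right _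

theorem coprime_of_odd_perfect_of_even_perfect (hm : m.Perfect) (hodd : Odd m) (hn : n.Perfect)
    (heven : Even n) (hmn : m < n) : m.Coprime n := by
  obtain ⟨k, hk, hq, rfl⟩ := eq_two_pow_mul_prime_mersenne_of_even_perfect hn heven
  set q := mersenne (k + 1)
  have hqm : ¬ q ∣ m := by
    intro hdvd
    have hq_sq : q ^ 2 ≤ m := Nat.le_of_dvd hm.2
      (sq_dvd_of_odd_perfect hm hodd hq (mersenne_mod_four (by lia)) hdvd)
    have hpow : 2 ^ k ≤ q := by
      have := succ_mersenne k
      have := mersenne_succ k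
      lia
    exact (hq_sq.trans_lt hmn).not_ge (sq q ▸ Nat.mul_le_mul_right q hpow)
  exact ((Nat.coprime_two_right.2 hodd).pow_right k).mul_right (hq.coprime_iff_not_dvd.2 hqm).symm

end Perfect

theorem stmt_5 (n δ : ℕ) (hδ : δ % 4 = 3) (hn6 : 6 < n)
    (hn : Nat.Perfect n) (hnδ : Nat.Perfect (n + δ)) :
    Nat.gcd δ n = 1 := by
  have hodd : Odd n := by
    by_contra hnot
    have h4 : 4 ∣ n := four_dvd_of_even_perfect hn (Nat.not_odd_iff_even.1 hnot) hn6.ne'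
    exact not_perfect_of_mod_four_eq_three (by lia) hnδ
  have heven : Even (n + δ) := hodd.add_odd (Nat.odd_iff.2 (by lia))
  have hcop : n.Coprime (n + δ) :=
    coprime_of_odd_perfect_of_even_perfect hn hodd hnδ heven (by lia)
  exact (Nat.coprime_self_add_right.1 hcop).symm
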